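/- Let ρ_j > 0, j = 0,1,2,…, satisfy ω(ρ_j) = 2^{-j} with ρ_0 = 2π, where ω is a modulus of continuity with ω(2π) = 1 and ω(2δ) < 2ω(δ) for 0 < δ ≤ 2π. Let E ⊆ [0,2π] be a closed set such that for every j ≥ 0, E is covered by 2^j closed intervals of equal length ρ_j. Then there exists c > 0 such that: for every λ ≥ 2 and every real function g on [0,2π] that is linear on each interval complementary to E in [0,2π], one has Σ_{|k| ≤ 2λ} |(e^{ig})^∧(k)| ≤ c · Θ(λ), where Θ(y) = (y/log y)·χ^{-1}((log y)²/y) and χ(δ) = δ·ω(δ). The constant c is independent of λ and g. -/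

import Mathlib

open MeasureTheory Real Set
open scoped ENNReal

/-- The k-th Fourier coefficient of a (2π-periodic) function on the circle,
identified with a function on [0, 2π]. -/
noncomputable def fourierCoef (f : ℝ → ℂ) (k : ℤ) : ℂ :=
  (1 / (2 * (Real.pi : ℂ))) *
    ∫ t in (0:ℝ)..(2 * Real.pi), f t * Complex.exp (-Complex.I * (k : ℂ) * (t : ℂ))

/-- The A_p(𝕋) norm: ℓ^p norm of the sequence of Fourier coefficients
(valued in ℝ≥0∞ so that divergence gives ∞). -/
noncomputable def ApNorm (p : ℝ) (f : ℝ → ℂ) : ℝ≥0∞ :=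
  (∑' k : ℤ, ((‖fourierCoef f k‖₊ : ℝ≥0∞) ^ p)) ^ (1 / p)

/-!
Put `δ = χ⁻¹(log² λ / λ)` and choose `j` with `ρ j ≤ δ` and `2 ^ j ≤ 2 / ω δ`, so that `E` is
covered by a union `F` of `2 ^ j` intervals of length `δ`. Over the `O(λ)` frequencies in the sum:

* on `F`, Cauchy–Schwarz and Parseval bound the sum of the coefficients of `e^{ig}` by
  `O(√(λ |F|))`, which is `O(√(λ δ / ω δ))`;
* off `F`, there are at most `2 ^ j + 1` intervals, on each of which `g` has some constant slope
  `a`; the `k`-th coefficient of such a piece is `O(1 / (1 + |a - k|))`, and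
  summing over `k` gives `O(log λ)`.

Since `λ δ ω(δ) = log² λ`, both contributions are `O(log λ / ω δ)`, which is `O(Θ(λ))`.
-/

lemma sum_le_sum_range_card_of_antitone {M : Type*} [AddCommMonoid M] [PartialOrder M]
    [IsOrderedAddMonoid M] {f : ℕ → M} (hf : Antitone f) (T : Finset ℕ) :
    ∑ n ∈ T, f n ≤ ∑ n ∈ Finset.range T.card, f n := by
  induction T using Finset.induction_on_max with
  | empty => simp
  | insert m T hT ih =>
    have hmT : m ∉ T := fun h => (hT m h).false
    have hcard : T.card ≤ m := by
      simpa using Finset.card_le_card fun n hn => Finset.mem_range.2 (hT n hn)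
    rw [Finset.sum_insert hmT, Finset.card_insert_of_notMem hmT, Finset.sum_range_succ, add_comm]
    exact add_le_add ih (hf hcard)

lemma monotone_harmonic : Monotone harmonic :=
  monotone_nat_of_le_succ fun n => by
    rw [harmonic_succ]
    exact le_add_of_nonneg_right (by positivity)

lemma harmonic_cast_nonneg (n : ℕ) : (0 : ℝ) ≤ harmonic n :=
  mod_cast harmonic_zero ▸ monotone_harmonic n.zero_le

lemma sum_inv_one_add_le_harmonic_of_injOn {ι : Type*} {S : Finset ι} {n : ι → ℕ} {x : ι → ℝ}
    (hn : InjOn n S) (hx : ∀ k ∈ S, n k ≤ x k) : ∑ k ∈ S, (1 + x k)⁻¹ ≤ harmonic S.card := by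
  classical
  have hanti : Antitone fun m : ℕ => (1 + (m : ℝ))⁻¹ := fun m m' h => by
    dsimp only
    gcongr
  calc ∑ k ∈ S, (1 + x k)⁻¹
      ≤ ∑ k ∈ S, (1 + (n k : ℝ))⁻¹ := Finset.sum_le_sum fun k hk => by gcongr; exact hx k hk
    _ = ∑ m ∈ S.image n, (1 + (m : ℝ))⁻¹ := by rw [Finset.sum_image hn]
    _ ≤ ∑ m ∈ Finset.range (S.image n).card, (1 + (m : ℝ))⁻¹ :=
        sum_le_sum_range_card_of_antitone hanti _
    _ = harmonic S.card := by simp [harmonic, Finset.card_image_of_injOn hn, add_comm]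

lemma sum_inv_one_add_abs_sub_le_harmonic (a : ℝ) (S : Finset ℤ) :
    ∑ k ∈ S, (1 + |a - k|)⁻¹ ≤ 2 * harmonic S.card := by
  have hfilter (p : ℤ → Prop) [DecidablePred p] :
      (harmonic (S.filter p).card : ℝ) ≤ harmonic S.card :=
    mod_cast monotone_harmonic (Finset.card_filter_le S p)
  have hright : ∑ k ∈ S with ⌈a⌉ ≤ k, (1 + |a - k|)⁻¹ ≤ harmonic S.card := by
    refine (sum_inv_one_add_le_harmonic_of_injOn (n := fun k => (k - ⌈a⌉).toNat) ?_ ?_).trans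
      (hfilter _)
    · intro k hk k' hk' h
      simp only [Finset.coe_filter, mem_ofPred_eq] at hk hk' h
      lia
    · intro k hk
      have hcast : ((k - ⌈a⌉).toNat : ℝ) = k - ⌈a⌉ := by
        exact_mod_cast Int.toNat_of_nonneg (sub_nonneg.2 (Finset.mem_filter.1 hk).2)
      linarith [Int.le_ceil a, neg_le_abs (a - k)]
  have hleft : ∑ k ∈ S with ¬ ⌈a⌉ ≤ k, (1 + |a - k|)⁻¹ ≤ harmonic S.card := by
    refine (sum_inv_one_add_le_harmonic_of_injOn (n := fun k => (⌈a⌉ - 1 - k).toNat) ?_ ?_).trans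
      (hfilter _)
    · intro k hk k' hk' h
      simp only [Finset.coe_filter, mem_ofPred_eq] at hk hk' h
      lia
    · intro k hk
      have hcast : ((⌈a⌉ - 1 - k).toNat : ℝ) = ⌈a⌉ - 1 - k := by
        have hlt := not_le.1 (Finset.mem_filter.1 hk).2
        exact_mod_cast Int.toNat_of_nonneg (by lia : 0 ≤ ⌈a⌉ - 1 - k)
      linarith [Int.ceil_lt_add_one a, le_abs_self (a - k)]
  rw [← Finset.sum_filter_add_sum_filter_not S (⌈a⌉ ≤ ·)]
  linarith

section Gaps

variable {α ι : Type*} [LinearOrder α] [Fintype ι] (l r : ι → α)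

/-- The `n`-th gap left by the intervals `[l i, r i]`: the points outside all of them that have
exactly `n` left endpoints to their left. Gaps may be empty. -/
def gap (n : ℕ) : Set α :=
  {x | x ∉ ⋃ i, Icc (l i) (r i) ∧ (Finset.univ.filter fun i => l i ≤ x).card = n}

lemma compl_iUnion_Icc_eq_iUnion_gap :
    (⋃ i, Icc (l i) (r i))ᶜ = ⋃ n ∈ Finset.range (Fintype.card ι + 1), gap l r n := by
  ext x
  simp [gap, Finset.card_le_univ]

lemma pairwiseDisjoint_gap (s : Set ℕ) : s.PairwiseDisjoint (gap l r) :=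
  fun _ _ _ _ hne => Set.disjoint_left.2 fun _ hx hx' => hne (hx.2.symm.trans hx'.2)

lemma ordConnected_gap (n : ℕ) : (gap l r n).OrdConnected := by
  refine ⟨fun x hx y hy z hz => ?_⟩
  have hxz : Finset.univ.filter (l · ≤ x) ⊆ Finset.univ.filter (l · ≤ z) :=
    Finset.monotone_filter_right _ fun i _ h => h.trans hz.1
  have hzy : Finset.univ.filter (l · ≤ z) ⊆ Finset.univ.filter (l · ≤ y) :=
    Finset.monotone_filter_right _ fun i _ h => h.trans hz.2
  have hcard : (Finset.univ.filter (l · ≤ z)).card = n :=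
    le_antisymm (hy.2 ▸ Finset.card_le_card hzy) (hx.2 ▸ Finset.card_le_card hxz)
  refine ⟨fun hzF => hx.1 ?_, hcard⟩
  obtain ⟨i, hli, hri⟩ := mem_iUnion.1 hzF
  have hlx : i ∈ Finset.univ.filter (l · ≤ x) := by
    rw [Finset.eq_of_subset_of_card_le hxz (hcard.trans hx.2.symm).le]
    simpa using hli
  exact mem_iUnion.2 ⟨i, by simpa using hlx, hz.1.trans hri⟩

end Gaps

section FourierCoef

variable {f : ℝ → ℂ} {A : Set ℝ}

lemma norm_exp_neg_I_mul_intCast_mul (k : ℤ) (t : ℝ) :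
    ‖Complex.exp (-Complex.I * (k : ℂ) * (t : ℂ))‖ = 1 := by
  simp [Complex.norm_exp]

lemma fourierCoef_eq_fourierCoeffOn (f : ℝ → ℂ) (k : ℤ) :
    fourierCoef f k = fourierCoeffOn two_pi_pos f k := by
  rw [fourierCoef, fourierCoeffOn_eq_integral, Complex.real_smul, sub_zero]
  push_cast
  congr 2 with t
  rw [fourier_coe_apply, smul_eq_mul, mul_comm]
  congr 2
  push_cast
  field_simp

lemma sum_norm_sq_fourierCoef_le (hf : MemLp f 2 (volume.restrict (Ioc 0 (2 * π))))
    (S : Finset ℤ) :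
    ∑ k ∈ S, ‖fourierCoef f k‖ ^ 2 ≤ (∫ t in 0..(2 * π), ‖f t‖ ^ 2) / (2 * π) := by
  simp only [fourierCoef_eq_fourierCoeffOn]
  refine (sum_le_hasSum S (fun _ _ => by positivity)
    (hasSum_sq_fourierCoeffOn two_pi_pos hf)).trans_eq ?_
  rw [smul_eq_mul, sub_zero, inv_mul_eq_div]

lemma fourierCoef_indicator (hA : MeasurableSet A) (f : ℝ → ℂ) (k : ℤ) :
    fourierCoef (A.indicator f) k = 1 / (2 * (π : ℂ)) *
      ∫ t in A ∩ Ioc 0 (2 * π), f t * Complex.exp (-Complex.I * (k : ℂ) * (t : ℂ)) := by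
  rw [fourierCoef, intervalIntegral.integral_of_le two_pi_pos.le, ← Measure.restrict_restrict hA,
    ← integral_indicator hA]
  simp only [indicator_mul_left]

lemma integrableOn_mul_exp (hf : IntegrableOn f (Ioc 0 (2 * π))) (k : ℤ) :
    IntegrableOn (fun t => f t * Complex.exp (-Complex.I * (k : ℂ) * (t : ℂ))) (Ioc 0 (2 * π)) :=
  Integrable.mul_bdd (c := 1) hf (by fun_prop) (.of_forall fun t =>
    (norm_exp_neg_I_mul_intCast_mul k t).le)

lemma fourierCoef_eq_zero_of_not_integrableOn (hf : ¬ IntegrableOn f (Ioc 0 (2 * π))) (k : ℤ) :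
    fourierCoef f k = 0 := by
  have hfk : ¬ IntegrableOn (fun t => f t * Complex.exp (-Complex.I * (k : ℂ) * (t : ℂ)))
      (Ioc 0 (2 * π)) := by
    refine fun h => hf ((integrableOn_mul_exp h (-k)).congr_fun (fun t _ => ?_) measurableSet_Ioc)
    simp [mul_assoc, ← Complex.exp_add]
  rw [fourierCoef, intervalIntegral.integral_of_le two_pi_pos.le, integral_undef hfk, mul_zero]

lemma fourierCoef_indicator_add_indicator_compl (hf : IntegrableOn f (Ioc 0 (2 * π)))
    (hA : MeasurableSet A) (k : ℤ) :
    fourierCoef (A.indicator f) k + fourierCoef (Aᶜ.indicator f) k = fourierCoef f k := by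
  rw [fourierCoef_indicator hA, fourierCoef_indicator hA.compl, ← mul_add, fourierCoef,
    intervalIntegral.integral_of_le two_pi_pos.le, inter_comm, inter_comm Aᶜ, ← sdiff_eq,
    integral_inter_add_sdiff hA (integrableOn_mul_exp hf k)]

lemma fourierCoef_indicator_biUnion {ι : Type*} {s : Finset ι} {A : ι → Set ℝ}
    (hf : IntegrableOn f (Ioc 0 (2 * π))) (hA : ∀ i ∈ s, MeasurableSet (A i))
    (hdisj : (s : Set ι).PairwiseDisjoint A) (k : ℤ) :
    fourierCoef ((⋃ i ∈ s, A i).indicator f) k = ∑ i ∈ s, fourierCoef ((A i).indicator f) k := by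
  rw [fourierCoef_indicator (s.measurableSet_biUnion hA), iUnion₂_inter,
    integral_biUnion_finset s (fun i hi => (hA i hi).inter measurableSet_Ioc)
      (hdisj.mono fun i => inter_subset_left)
      fun i _ => (integrableOn_mul_exp hf k).mono_set inter_subset_right, Finset.mul_sum]
  exact Finset.sum_congr rfl fun i hi => (fourierCoef_indicator (hA i hi) f k).symm

lemma sum_norm_fourierCoef_indicator_le
    (hf : AEStronglyMeasurable f (volume.restrict (Ioc 0 (2 * π)))) (hf_le : ∀ t, ‖f t‖ ≤ 1)
    (hA : MeasurableSet A) (S : Finset ℤ) :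
    ∑ k ∈ S, ‖fourierCoef (A.indicator f) k‖ ≤
      √(S.card * (volume.real (A ∩ Ioc 0 (2 * π)) / (2 * π))) := by
  have hmemLp : MemLp (A.indicator f) 2 (volume.restrict (Ioc 0 (2 * π))) :=
    .of_bound (hf.indicator hA) 1
      (.of_forall fun t => (norm_indicator_le_norm_self f t).trans (hf_le t))
  have hsq (t : ℝ) : ‖A.indicator f t‖ ^ 2 ≤ A.indicator 1 t := by
    by_cases ht : t ∈ A <;> simp [ht, hf_le t]
  have hint : ∫ t in 0..(2 * π), ‖A.indicator f t‖ ^ 2 ≤ volume.real (A ∩ Ioc 0 (2 * π)) := by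
    rw [intervalIntegral.integral_of_le two_pi_pos.le]
    calc ∫ t in Ioc 0 (2 * π), ‖A.indicator f t‖ ^ 2
        ≤ ∫ t in Ioc 0 (2 * π), A.indicator 1 t :=
          integral_mono hmemLp.integrable_norm_pow' ((integrable_const 1).indicator hA) hsq
      _ = volume.real (A ∩ Ioc 0 (2 * π)) := by
          rw [integral_indicator_one hA, measureReal_restrict_apply hA]
  refine Real.le_sqrt_of_sq_le (sq_sum_le_card_mul_sum_sq.trans ?_)
  gcongr
  exact (sum_norm_sq_fourierCoef_le hmemLp S).trans (by gcongr)

end FourierCoef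

/-- `g` is affine on every nonempty open interval contained in `A`, with slope and intercept
depending on the interval. -/
def AffineOnIntervals (g : ℝ → ℝ) (A : Set ℝ) : Prop :=
  ∀ u v : ℝ, u < v → Ioo u v ⊆ A → ∃ a b : ℝ, ∀ t ∈ Ioo u v, g t = a * t + b

lemma AffineOnIntervals.mono {g : ℝ → ℝ} {A B : Set ℝ} (hg : AffineOnIntervals g B)
    (hAB : A ⊆ B) : AffineOnIntervals g A :=
  fun u v huv hA => hg u v huv (hA.trans hAB)

lemma exists_inter_Ioc_ae_eq_Ioc {J : Set ℝ} (hJ : J.OrdConnected) {a b : ℝ} (hab : a ≤ b) :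
    ∃ u v, a ≤ u ∧ u ≤ v ∧ v ≤ b ∧ Ioo u v ⊆ J ∧ (J ∩ Ioc a b : Set ℝ) =ᵐ[volume] Ioc u v := by
  set I := J ∩ Ioc a b
  rcases I.eq_empty_or_nonempty with hI | hI
  · exact ⟨a, a, le_rfl, le_rfl, hab, by simp, by simp [hI]⟩
  have hbelow : BddBelow I := bddBelow_Ioc.mono inter_subset_right
  have habove : BddAbove I := bddAbove_Ioc.mono inter_subset_right
  have hconn : IsConnected I := ⟨hI, (hJ.inter ordConnected_Ioc).isPreconnected⟩
  have hIoo : Ioo (sInf I) (sSup I) ⊆ I := hconn.Ioo_csInf_csSup_subset hbelow habove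
  refine ⟨sInf I, sSup I, le_csInf hI fun x hx => hx.2.1.le, csInf_le_csSup hI hbelow habove,
    csSup_le hI fun x hx => hx.2.2, hIoo.trans inter_subset_left, ?_⟩
  exact ((subset_Icc_csInf_csSup hbelow habove).eventuallyLE.trans_eq Ioc_ae_eq_Icc.symm).antisymm
    (Ioo_ae_eq_Ioc.symm.trans_le hIoo.eventuallyLE)

lemma abs_mul_norm_integral_exp_le (θ u v : ℝ) :
    |θ| * ‖∫ t in u..v, Complex.exp (Complex.I * θ * t)‖ ≤ 2 := by
  rcases eq_or_ne θ 0 with rfl | hθ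
  · simp
  have hnorm (w : ℝ) : ‖Complex.exp (Complex.I * θ * w)‖ = 1 := by simp [Complex.norm_exp]
  rw [integral_exp_mul_complex (mul_ne_zero Complex.I_ne_zero (by exact_mod_cast hθ)), norm_div,
    norm_mul, Complex.norm_I, one_mul, Complex.norm_real, Real.norm_eq_abs,
    mul_div_cancel₀ _ (abs_ne_zero.2 hθ)]
  refine (norm_sub_le _ _).trans ?_
  rw [hnorm, hnorm]
  norm_num

lemma norm_integral_exp_affine_le {g : ℝ → ℝ} {a b u v : ℝ} (hu : 0 ≤ u) (huv : u ≤ v)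
    (hv : v ≤ 2 * π) (hg : ∀ t ∈ Ioo u v, g t = a * t + b) (k : ℤ) :
    (1 + |a - k|) * ‖∫ t in u..v, Complex.exp (Complex.I * (g t : ℂ)) *
      Complex.exp (-Complex.I * (k : ℂ) * (t : ℂ))‖ ≤ 2 * π + 2 := by
  have hphase : ∫ t in u..v, Complex.exp (Complex.I * (g t : ℂ)) *
      Complex.exp (-Complex.I * (k : ℂ) * (t : ℂ)) =
      Complex.exp (Complex.I * b) * ∫ t in u..v, Complex.exp (Complex.I * (a - k : ℝ) * t) := by
    rw [← intervalIntegral.integral_const_mul]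
    refine intervalIntegral.integral_congr_Ioo_of_le huv fun t ht => ?_
    simp only [hg t ht, ← Complex.exp_add]
    congr 1
    push_cast
    ring
  have hlength : ‖∫ t in u..v, Complex.exp (Complex.I * (a - k : ℝ) * t)‖ ≤ 2 * π := by
    refine (intervalIntegral.norm_integral_le_of_norm_le_const (C := 1) fun t _ => ?_).trans ?_
    · simp [Complex.norm_exp]
    · rw [one_mul, abs_of_nonneg (sub_nonneg.2 huv)]
      linarith
  have hb : ‖Complex.exp (Complex.I * b)‖ = 1 := by simp [Complex.norm_exp]
  rw [hphase, norm_mul, hb, one_mul, one_add_mul]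
  exact add_le_add hlength (abs_mul_norm_integral_exp_le _ _ _)

lemma exists_norm_fourierCoef_indicator_exp_le {g : ℝ → ℝ} {J : Set ℝ} (hJ : J.OrdConnected)
    (hg : AffineOnIntervals g (Icc 0 (2 * π) ∩ J)) :
    ∃ a : ℝ, ∀ k : ℤ, ‖fourierCoef (J.indicator fun t => Complex.exp (Complex.I * (g t : ℂ))) k‖ ≤
      2 * (1 + |a - k|)⁻¹ := by
  obtain ⟨u, v, hu, huv, hv, hJ_sub, hJ_ae⟩ := exists_inter_Ioc_ae_eq_Ioc hJ two_pi_pos.le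
  obtain ⟨a, b, hab⟩ : ∃ a b : ℝ, ∀ t ∈ Ioo u v, g t = a * t + b := by
    rcases huv.eq_or_lt with rfl | huv
    · simp
    · exact hg u v huv (subset_inter (Ioo_subset_Icc_self.trans (Icc_subset_Icc hu hv)) hJ_sub)
  refine ⟨a, fun k => ?_⟩
  rw [fourierCoef_indicator hJ.measurableSet, setIntegral_congr_set hJ_ae,
    ← intervalIntegral.integral_of_le huv, norm_mul, norm_div, norm_one, norm_mul,
    Complex.norm_real, Complex.norm_ofNat, Real.norm_of_nonneg pi_pos.le, ← div_eq_mul_inv,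
    le_div_iff₀' (by positivity), mul_left_comm, one_div, inv_mul_le_iff₀ two_pi_pos]
  linarith [norm_integral_exp_affine_le hu huv hv hab k, pi_gt_three]

theorem sum_norm_fourierCoef_exp_le {ι : Type*} [Fintype ι] {l r : ι → ℝ} {g : ℝ → ℝ}
    (hg : AffineOnIntervals g (Icc 0 (2 * π) \ ⋃ i, Icc (l i) (r i))) (S : Finset ℤ) :
    ∑ k ∈ S, ‖fourierCoef (fun t => Complex.exp (Complex.I * (g t : ℂ))) k‖ ≤
      √(S.card * (volume.real ((⋃ i, Icc (l i) (r i)) ∩ Ioc 0 (2 * π)) / (2 * π))) +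
        (Fintype.card ι + 1) * (4 * harmonic S.card) := by
  set f : ℝ → ℂ := fun t => Complex.exp (Complex.I * (g t : ℂ))
  set F := ⋃ i, Icc (l i) (r i)
  have hF : MeasurableSet F := .iUnion fun _ => measurableSet_Icc
  have hgap_meas (n : ℕ) : MeasurableSet (gap l r n) := (ordConnected_gap l r n).measurableSet
  by_cases hf : IntegrableOn f (Ioc 0 (2 * π))
  swap
  -- `g` is arbitrary on the intervals, so `f` may fail to be measurable; its coefficients are then
  -- zero by the convention for integrals.
  · simp only [fourierCoef_eq_zero_of_not_integrableOn hf, norm_zero, Finset.sum_const_zero]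
    have := harmonic_cast_nonneg S.card
    positivity
  have hgap (n : ℕ) :
      ∑ k ∈ S, ‖fourierCoef ((gap l r n).indicator f) k‖ ≤ 4 * harmonic S.card := by
    obtain ⟨a, ha⟩ := exists_norm_fourierCoef_indicator_exp_le (ordConnected_gap l r n)
      (hg.mono fun x hx => ⟨hx.1, hx.2.1⟩)
    calc ∑ k ∈ S, ‖fourierCoef ((gap l r n).indicator f) k‖
        ≤ ∑ k ∈ S, 2 * (1 + |a - k|)⁻¹ := Finset.sum_le_sum fun k _ => ha k
      _ ≤ 4 * harmonic S.card := by
          rw [← Finset.mul_sum]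
          linarith [sum_inv_one_add_abs_sub_le_harmonic a S]
  have hsplit (k : ℤ) : ‖fourierCoef f k‖ ≤ ‖fourierCoef (F.indicator f) k‖ +
      ∑ n ∈ Finset.range (Fintype.card ι + 1), ‖fourierCoef ((gap l r n).indicator f) k‖ := by
    rw [← fourierCoef_indicator_add_indicator_compl hf hF, compl_iUnion_Icc_eq_iUnion_gap,
      fourierCoef_indicator_biUnion hf (fun n _ => hgap_meas n) (pairwiseDisjoint_gap l r _)]
    exact (norm_add_le _ _).trans (by gcongr; exact norm_sum_le _ _)
  calc ∑ k ∈ S, ‖fourierCoef f k‖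
      ≤ ∑ k ∈ S, ‖fourierCoef (F.indicator f) k‖ + ∑ n ∈ Finset.range (Fintype.card ι + 1),
          ∑ k ∈ S, ‖fourierCoef ((gap l r n).indicator f) k‖ := by
        rw [Finset.sum_comm, ← Finset.sum_add_distrib]
        exact Finset.sum_le_sum fun k _ => hsplit k
    _ ≤ √(S.card * (volume.real (F ∩ Ioc 0 (2 * π)) / (2 * π))) +
          (Fintype.card ι + 1) * (4 * harmonic S.card) := by
        gcongr
        · exact sum_norm_fourierCoef_indicator_le hf.aestronglyMeasurable
            (fun t => by simp [f, Complex.norm_exp]) hF S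
        · simpa using Finset.sum_le_card_nsmul (Finset.range (Fintype.card ι + 1)) _ _
            fun n _ => hgap n

lemma apply_le_of_mul_apply_le_of_monotoneOn {R : Type*} [Semiring R] [LinearOrder R]
    [IsStrictOrderedRing R] {ω : R → R} (hω : MonotoneOn ω (Ici 0)) {a δ : R} (ha : 0 ≤ a)
    (hωa : 0 < ω a) (hδ : 0 ≤ δ) (h : δ * ω δ ≤ a * ω a) : ω δ ≤ ω a := by
  by_contra! hlt
  have haδ : a < δ := hω.reflect_lt ha hδ hlt
  exact h.not_gt (mul_lt_mul'' haδ hlt ha hωa.le)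

lemma exists_le_and_two_pow_le_two_div {ω : ℝ → ℝ} (hω : MonotoneOn ω (Ici 0)) {ρ : ℕ → ℝ}
    (hρ_pos : ∀ j, 0 < ρ j) (hρ : ∀ j : ℕ, ω (ρ j) = (2 : ℝ) ^ (-(j : ℝ))) {δ : ℝ} (hδ : 0 ≤ δ)
    (hωδ_pos : 0 < ω δ) (hωδ_le : ω δ ≤ 1) :
    ∃ j, ρ j ≤ δ ∧ (2 : ℝ) ^ j ≤ 2 / ω δ := by
  obtain ⟨n, hlt, hle⟩ :=
    exists_nat_pow_near_of_lt_one hωδ_pos hωδ_le one_half_pos (one_half_lt_one (α := ℝ))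
  refine ⟨n + 1, (hω.reflect_lt (hρ_pos _).le hδ ?_).le, ?_⟩
  · rwa [hρ, rpow_neg zero_le_two, rpow_natCast, ← inv_pow, ← one_div]
  · calc (2 : ℝ) ^ (n + 1) = 2 / (1 / 2) ^ n := by rw [one_div, inv_pow, div_inv_eq_mul, pow_succ']
      _ ≤ 2 / ω δ := by gcongr

lemma sq_log_le_four_mul {x : ℝ} (hx : 1 ≤ x) : log x ^ 2 ≤ 4 * x := by
  have hx0 : 0 ≤ x := zero_le_one.trans hx
  have hsqrt : log x ≤ 2 * √x := by
    have := log_le_self (sqrt_nonneg x)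
    rw [log_sqrt hx0] at this
    linarith
  calc log x ^ 2 ≤ (2 * √x) ^ 2 := by gcongr; exact log_nonneg hx
    _ = 4 * x := by rw [mul_pow, sq_sqrt hx0]; norm_num

lemma card_Icc_neg_floor_floor_le {R : Type*} [Ring R] [LinearOrder R] [IsStrictOrderedRing R]
    [FloorRing R] {x : R} (hx : 0 ≤ x) : ((Finset.Icc (-⌊x⌋) ⌊x⌋).card : R) ≤ 2 * x + 1 := by
  have hfloor : 0 ≤ ⌊x⌋ := Int.floor_nonneg.2 hx
  have hcard : ((Finset.Icc (-⌊x⌋) ⌊x⌋).card : ℤ) = 2 * ⌊x⌋ + 1 := by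
    rw [Int.card_Icc]
    lia
  calc ((Finset.Icc (-⌊x⌋) ⌊x⌋).card : R) = 2 * ⌊x⌋ + 1 := mod_cast hcard
    _ ≤ 2 * x + 1 := by gcongr; exact Int.floor_le x

lemma harmonic_le_six_mul_log {n : ℕ} {x : ℝ} (hx : 2 ≤ x) (hn : n ≤ 5 * x) :
    harmonic n ≤ 6 * log x := by
  have hlog : 1 ≤ 2 * log x := by linarith [log_two_gt_d9, log_le_log zero_lt_two hx]
  rcases n.eq_zero_or_pos with rfl | hn_pos
  · simp only [harmonic_zero, Rat.cast_zero]
    linarith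
  have hpow : (n : ℝ) ≤ x ^ 4 := by
    have : (2 : ℝ) ^ 3 ≤ x ^ 3 := by gcongr
    nlinarith
  calc (harmonic n : ℝ) ≤ 1 + log n := harmonic_le_one_add_log n
    _ ≤ 1 + log (x ^ 4) := by gcongr
    _ ≤ 6 * log x := by
        rw [log_pow]
        push_cast
        linarith

lemma volume_real_iUnion_Icc_add_inter_le {ι : Type*} [Fintype ι] (l : ι → ℝ) {δ : ℝ}
    (hδ : 0 ≤ δ) (A : Set ℝ) :
    volume.real ((⋃ i, Icc (l i) (l i + δ)) ∩ A) ≤ Fintype.card ι * δ :=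
  calc volume.real ((⋃ i, Icc (l i) (l i + δ)) ∩ A)
      ≤ volume.real (⋃ i, Icc (l i) (l i + δ)) :=
        measureReal_mono inter_subset_left (isCompact_iUnion fun _ => isCompact_Icc).measure_ne_top
    _ ≤ ∑ i, volume.real (Icc (l i) (l i + δ)) := measureReal_iUnion_fintype_le _
    _ = Fintype.card ι * δ := by simp [volume_real_Icc, hδ]

theorem sum_norm_fourierCoef_exp_le_log_div {ι : Type*} [Fintype ι] {l : ι → ℝ} {g : ℝ → ℝ}
    {lam δ w : ℝ} (hg : AffineOnIntervals g (Icc 0 (2 * π) \ ⋃ i, Icc (l i) (l i + δ)))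
    (hlam : 2 ≤ lam) (hδ : 0 ≤ δ) (hw_pos : 0 < w) (hw_le : w ≤ 1)
    (hδw : δ * w = log lam ^ 2 / lam) (hcard : Fintype.card ι ≤ 2 / w) :
    ∑ k ∈ Finset.Icc (-⌊2 * lam⌋) ⌊2 * lam⌋,
        ‖fourierCoef (fun t => Complex.exp (Complex.I * (g t : ℂ))) k‖ ≤
      74 * (log lam / w) := by
  set S := Finset.Icc (-⌊2 * lam⌋) ⌊2 * lam⌋
  set F := ⋃ i, Icc (l i) (l i + δ)
  have hlog : 0 ≤ log lam := log_nonneg (by linarith)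
  have hS : (S.card : ℝ) ≤ 5 * lam := by
    linarith [card_Icc_neg_floor_floor_le (x := 2 * lam) (by linarith)]
  have hF : volume.real (F ∩ Ioc 0 (2 * π)) ≤ 2 / w * δ :=
    (volume_real_iUnion_Icc_add_inter_le l hδ _).trans (by gcongr)
  have hcover : S.card * (volume.real (F ∩ Ioc 0 (2 * π)) / (2 * π)) ≤ (2 * (log lam / w)) ^ 2 := by
    calc S.card * (volume.real (F ∩ Ioc 0 (2 * π)) / (2 * π))
        ≤ 5 * lam * (2 / w * δ / (2 * 3)) := by
          gcongr
          exact pi_gt_three.le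
      _ = 5 / 3 * (log lam / w) ^ 2 := by
          rw [eq_div_iff (by linarith)] at hδw
          field_simp
          linarith
      _ ≤ (2 * (log lam / w)) ^ 2 := by
          rw [mul_pow]
          gcongr
          norm_num
  have hgaps : (Fintype.card ι + 1 : ℝ) ≤ 3 / w := by
    linarith [one_le_one_div hw_pos hw_le, add_div 2 1 w]
  calc _ ≤ √(S.card * (volume.real (F ∩ Ioc 0 (2 * π)) / (2 * π))) +
        (Fintype.card ι + 1) * (4 * harmonic S.card) := sum_norm_fourierCoef_exp_le hg S
    _ ≤ 2 * (log lam / w) + 3 / w * (4 * (6 * log lam)) := by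
        refine add_le_add (sqrt_le_iff.2 ⟨by positivity, hcover⟩) ?_
        have := harmonic_cast_nonneg S.card
        gcongr
        exact harmonic_le_six_mul_log hlam hS
    _ = 74 * (log lam / w) := by ring

theorem statement8_general {ω : ℝ → ℝ} (hω : MonotoneOn ω (Ici 0)) (hω_2pi : ω (2 * π) = 1)
    {χinv : ℝ → ℝ} (hχinv : ∀ y, 0 ≤ y → 0 ≤ χinv y ∧ χinv y * ω (χinv y) = y)
    {ρ : ℕ → ℝ} (hρ_pos : ∀ j, 0 < ρ j) (hρ : ∀ j : ℕ, ω (ρ j) = (2 : ℝ) ^ (-(j : ℝ)))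
    {E : Set ℝ} (hE : ∀ j : ℕ, ∃ l : Fin (2 ^ j) → ℝ, E ⊆ ⋃ i, Icc (l i) (l i + ρ j))
    {lam : ℝ} (hlam : 2 ≤ lam) {g : ℝ → ℝ} (hg : AffineOnIntervals g (Icc 0 (2 * π) \ E)) :
    ∑ k ∈ Finset.Icc (-⌊2 * lam⌋) ⌊2 * lam⌋,
        ‖fourierCoef (fun t => Complex.exp (Complex.I * (g t : ℂ))) k‖ ≤
      74 * (lam / log lam * χinv (log lam ^ 2 / lam)) := by
  have hlog : 0 < log lam := log_pos (by linarith)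
  have hy : 0 < log lam ^ 2 / lam := by positivity
  obtain ⟨hδ, hδω⟩ := hχinv _ hy.le
  set δ := χinv (log lam ^ 2 / lam)
  have hωδ_pos : 0 < ω δ := pos_of_mul_pos_right (hδω ▸ hy) hδ
  have hωδ_le : ω δ ≤ 1 := by
    refine hω_2pi ▸ apply_le_of_mul_apply_le_of_monotoneOn hω two_pi_pos.le (by simp [hω_2pi]) hδ ?_
    rw [hδω, hω_2pi, div_le_iff₀ (by linarith)]
    nlinarith [sq_log_le_four_mul (by linarith : 1 ≤ lam), pi_gt_three]
  obtain ⟨j, hρδ, hj⟩ := exists_le_and_two_pow_le_two_div hω hρ_pos hρ hδ hωδ_pos hωδ_le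
  obtain ⟨l, hl⟩ := hE j
  have hEδ : E ⊆ ⋃ i, Icc (l i) (l i + δ) :=
    hl.trans (iUnion_mono fun i => Icc_subset_Icc_right (by linarith))
  have hΘ : lam / log lam * δ = log lam / ω δ := by
    rw [eq_div_iff hωδ_pos.ne', mul_assoc, hδω]
    field_simp
  rw [hΘ]
  exact sum_norm_fourierCoef_exp_le_log_div (hg.mono (sdiff_subset_sdiff_right hEδ)) hlam hδ hωδ_pos
    hωδ_le hδω (by simpa using hj)

/-- Lemma 3: for g linear on each interval complementary to the Cantor-type
set E, Σ_{|k|≤2λ} |(e^{ig})^∧(k)| ≤ c·Θ(λ), where Θ(y) = (y/log y)·χ^{-1}((log y)²/y). -/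
theorem statement8
    -- ω is a modulus of continuity: continuous non-decreasing on [0,∞), ω(0)=0, ω(δ)>0 for δ>0,
    -- with χ(δ) = δ·ω(δ) strictly increasing and unbounded, and χinv its inverse.
    (ω : ℝ → ℝ)
    (hω_cont : ContinuousOn ω (Ici 0)) (hω_mono : MonotoneOn ω (Ici 0))
    (hω_zero : ω 0 = 0) (hω_pos : ∀ δ : ℝ, 0 < δ → 0 < ω δ)
    (hχ_mono : StrictMonoOn (fun δ => δ * ω δ) (Ici 0))
    (hχ_unbdd : ∀ y : ℝ, ∃ δ : ℝ, 0 ≤ δ ∧ y < δ * ω δ)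
    (χinv : ℝ → ℝ)
    (hχinv_left : ∀ δ : ℝ, 0 ≤ δ → χinv (δ * ω δ) = δ)
    (hχinv_right : ∀ y : ℝ, 0 ≤ y → 0 ≤ χinv y ∧ χinv y * ω (χinv y) = y)
    (hω_2pi : ω (2 * Real.pi) = 1)
    (hω_doubling : ∀ δ : ℝ, 0 < δ → δ ≤ 2 * Real.pi → ω (2 * δ) < 2 * ω δ)
    -- the lengths ρ_j, with ω(ρ_j) = 2^{-j}, ρ_0 = 2π
    (ρ : ℕ → ℝ) (hρ_pos : ∀ j : ℕ, 0 < ρ j) (hρ0 : ρ 0 = 2 * Real.pi)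
    (hρ : ∀ j : ℕ, ω (ρ j) = (2 : ℝ) ^ (-(j : ℝ)))
    -- the closed set E, covered for each j by 2^j closed intervals of length ρ_j
    (E : Set ℝ) (hE_sub : E ⊆ Icc 0 (2 * Real.pi)) (hE_closed : IsClosed E)
    (hE_cover : ∀ j : ℕ, ∃ centers : Fin (2 ^ j) → ℝ,
      E ⊆ ⋃ i : Fin (2 ^ j), Icc (centers i) (centers i + ρ j)) :
    ∃ c : ℝ, 0 < c ∧
      ∀ lam : ℝ, 2 ≤ lam →
        ∀ g : ℝ → ℝ,
          -- g is linear on each interval complementary to E in [0,2π]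
          (∀ u v : ℝ, u < v → Ioo u v ⊆ Icc 0 (2 * Real.pi) \ E →
            ∃ a b : ℝ, ∀ t ∈ Ioo u v, g t = a * t + b) →
          ∑ k ∈ Finset.Icc (-⌊2 * lam⌋) ⌊2 * lam⌋,
            ‖fourierCoef (fun t => Complex.exp (Complex.I * (g t : ℂ))) k‖
            ≤ c * ((lam / Real.log lam) * χinv ((Real.log lam) ^ 2 / lam)) :=
  ⟨74, by norm_num, fun _ hlam _ hg =>
    statement8_general hω_mono hω_2pi hχinv_right hρ_pos hρ hE_cover hlam hg⟩
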